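/- Let f: 𝒳 → ℝ be convex, differentiable, and (r,ℓ)-smooth on open convex 𝒳 ⊆ ℝ^d. Let x ∈ 𝒳 and y ∈ B(x, r(‖∇f(x)‖)/2). Then y ∈ 𝒳 and ⟨∇f(x) − ∇f(y), x − y⟩ ≥ (1/L)‖∇f(x) − ∇f(y)‖² where L = ℓ(‖∇f(x)‖). -/

import Mathlib

open RealInnerProductSpace

lemma line_deriv {d : ℕ} (f : EuclideanSpace ℝ (Fin d) → ℝ)
    (a v G : EuclideanSpace ℝ (Fin d)) (t : ℝ) (h : HasGradientAt f G (a + t • v)) :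
    HasDerivAt (fun s : ℝ => f (a + s • v)) ⟪G, v⟫ t := by
  have h1 : HasDerivAt (fun s : ℝ => a + s • v) v t := by
    simpa using ((hasDerivAt_id t).smul_const v).const_add a
  have h2 := h.hasFDerivAt.comp_hasDerivAt t h1
  simpa [Function.comp_def] using h2

lemma convex_lower {d : ℕ} {X : Set (EuclideanSpace ℝ (Fin d))}
    {f : EuclideanSpace ℝ (Fin d) → ℝ} (hconv : ConvexOn ℝ X f)
    {a b G : EuclideanSpace ℝ (Fin d)} (ha : a ∈ X) (hb : b ∈ X) (h : HasGradientAt f G a) :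
    f a + ⟪G, b - a⟫ ≤ f b := by
  have hc := hconv.comp_affineMap (AffineMap.lineMap a b : ℝ →ᵃ[ℝ] _)
  have hd : HasDerivAt (f ∘ (AffineMap.lineMap a b : ℝ →ᵃ[ℝ] _)) ⟪G, b - a⟫ 0 := by
    have := line_deriv f a (b - a) G 0 (by simpa using h)
    refine this.congr_of_eventuallyEq (Filter.Eventually.of_forall fun s => ?_)
    simp [AffineMap.lineMap_apply, add_comm]
  have := hc.le_slope_of_hasDerivAt (x := 0) (y := 1) (by simpa using ha) (by simpa using hb)
    one_pos hd
  simp [slope_def_field] at this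
  simp only [inner_sub_right] at this ⊢
  linarith

lemma descent {d : ℕ} {S : Set (EuclideanSpace ℝ (Fin d))} (hS : Convex ℝ S)
    {f : EuclideanSpace ℝ (Fin d) → ℝ} {g : EuclideanSpace ℝ (Fin d) → EuclideanSpace ℝ (Fin d)}
    (hgrad : ∀ x ∈ S, HasGradientAt f (g x) x) {L : ℝ}
    (hlip : ∀ x ∈ S, ∀ y ∈ S, ‖g x - g y‖ ≤ L * ‖x - y‖)
    {a b : EuclideanSpace ℝ (Fin d)} (ha : a ∈ S) (hb : b ∈ S) :
    f b ≤ f a + ⟪g a, b - a⟫ + L / 2 * ‖b - a‖ ^ 2 := by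
  have hmem : ∀ t ∈ Set.Icc (0:ℝ) 1, a + t • (b - a) ∈ S := fun t ht =>
    hS.add_smul_sub_mem ha hb ht
  have hder : ∀ t ∈ Set.Icc (0:ℝ) 1, HasDerivAt
      (fun s : ℝ => f (a + s • (b - a)) - s * ⟪g a, b - a⟫ - s ^ 2 * (L / 2 * ‖b - a‖ ^ 2))
      (⟪g (a + t • (b - a)), b - a⟫ - ⟪g a, b - a⟫ - 2 * t * (L / 2 * ‖b - a‖ ^ 2)) t := by
    intro t ht
    have h1 := line_deriv f a (b - a) _ t (hgrad _ (hmem t ht))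
    have h2 := (hasDerivAt_id t).mul_const ⟪g a, b - a⟫
    have h3 := (hasDerivAt_pow 2 t).mul_const (L / 2 * ‖b - a‖ ^ 2)
    refine ((h1.sub h2).sub h3).congr_deriv ?_
    simp
  have hanti := antitoneOn_of_deriv_nonpos (convex_Icc (0:ℝ) 1)
    (fun t ht => (hder t ht).continuousAt.continuousWithinAt)
    (fun t ht => (hder t (interior_subset ht)).differentiableAt.differentiableWithinAt)
    (fun t ht => by
      have ht' := interior_subset ht
      rw [(hder t ht').deriv, ← inner_sub_left]
      have h1 := real_inner_le_norm (g (a + t • (b - a)) - g a) (b - a)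
      have h2 := hlip _ (hmem t ht') a ha
      rw [add_sub_cancel_left, norm_smul, Real.norm_of_nonneg ht'.1] at h2
      have h3 := mul_le_mul_of_nonneg_right h2 (norm_nonneg (b - a))
      nlinarith)
  have := hanti (Set.left_mem_Icc.2 zero_le_one) (Set.right_mem_Icc.2 zero_le_one) zero_le_one
  simp at this
  simp only [inner_sub_right] at this ⊢
  linarith

lemma half_coco {d : ℕ} {X S : Set (EuclideanSpace ℝ (Fin d))} (hS : Convex ℝ S) (hSX : S ⊆ X)
    {f : EuclideanSpace ℝ (Fin d) → ℝ} (hconv : ConvexOn ℝ X f)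
    {g : EuclideanSpace ℝ (Fin d) → EuclideanSpace ℝ (Fin d)}
    (hgrad : ∀ x ∈ X, HasGradientAt f (g x) x) {L : ℝ} (hL : 0 < L)
    (hlip : ∀ x ∈ S, ∀ y ∈ S, ‖g x - g y‖ ≤ L * ‖x - y‖)
    {a b : EuclideanSpace ℝ (Fin d)} (ha : a ∈ S) (hb : b ∈ S)
    (hz : a - (1 / L) • (g a - g b) ∈ S) :
    f b + ⟪g b, a - b⟫ + 1 / L / 2 * ‖g a - g b‖ ^ 2 ≤ f a := by
  have h1 := descent hS (fun x hx => hgrad x (hSX hx)) hlip ha hz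
  have h2 := convex_lower hconv (hSX hb) (hSX hz) (hgrad b (hSX hb))
  have e1 : a - (1 / L) • (g a - g b) - a = -((1 / L) • (g a - g b)) := by abel
  have e2 : a - (1 / L) • (g a - g b) - b = (a - b) - (1 / L) • (g a - g b) := by abel
  rw [e1, norm_neg, norm_smul, Real.norm_of_nonneg (by positivity), inner_neg_right,
    inner_smul_right, mul_pow] at h1
  rw [e2, inner_sub_right, inner_smul_right] at h2
  have h3 : ⟪g a, g a - g b⟫ - ⟪g b, g a - g b⟫ = ‖g a - g b‖ ^ 2 := by
    rw [← inner_sub_left, real_inner_self_eq_norm_sq]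
  have h4 : L / 2 * ((1 / L) ^ 2 * ‖g a - g b‖ ^ 2) = 1 / L / 2 * ‖g a - g b‖ ^ 2 := by
    field_simp
  rw [h4] at h1
  have h5 := congrArg (fun s => 1 / L * s) h3
  simp only [mul_sub] at h5
  linarith

theorem local_cocoercivity (d : ℕ)
    (X : Set (EuclideanSpace ℝ (Fin d))) (hX : IsOpen X) (hXconv : Convex ℝ X)
    (f : EuclideanSpace ℝ (Fin d) → ℝ) (hconv : ConvexOn ℝ X f)
    (g : EuclideanSpace ℝ (Fin d) → EuclideanSpace ℝ (Fin d))
    (hgrad : ∀ x ∈ X, HasGradientAt f (g x) x)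
    (ℓ r : ℝ → ℝ) (hℓmono : Monotone ℓ) (hℓpos : ∀ u : ℝ, 0 ≤ u → 0 < ℓ u)
    (hranti : Antitone r) (hrpos : ∀ u : ℝ, 0 ≤ u → 0 < r u)
    (hball : ∀ x ∈ X, Metric.closedBall x (r ‖g x‖) ⊆ X)
    (hlip : ∀ x ∈ X, ∀ x₁ ∈ Metric.closedBall x (r ‖g x‖),
      ∀ x₂ ∈ Metric.closedBall x (r ‖g x‖),
        ‖g x₁ - g x₂‖ ≤ ℓ ‖g x‖ * ‖x₁ - x₂‖)
    (x y : EuclideanSpace ℝ (Fin d)) (hx : x ∈ X)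
    (hy : y ∈ Metric.closedBall x (r ‖g x‖ / 2)) :
    y ∈ X ∧ ⟪g x - g y, x - y⟫ ≥ (1 / ℓ ‖g x‖) * ‖g x - g y‖ ^ 2 := by
  have hL := hℓpos ‖g x‖ (norm_nonneg _)
  have hr := hrpos ‖g x‖ (norm_nonneg _)
  have hxS : x ∈ Metric.closedBall x (r ‖g x‖) := Metric.mem_closedBall_self hr.le
  have hyS : y ∈ Metric.closedBall x (r ‖g x‖) :=
    Metric.closedBall_subset_closedBall (by linarith) hy
  have hl := hlip x hx
  have hsub := hball x hx
  refine ⟨hsub hyS, ?_⟩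
  have hyn : ‖x - y‖ ≤ r ‖g x‖ / 2 := by
    rw [← dist_eq_norm, dist_comm]; exact hy
  have hstep : ‖(1 / ℓ ‖g x‖) • (g x - g y)‖ ≤ r ‖g x‖ / 2 := by
    rw [norm_smul, Real.norm_of_nonneg (by positivity), one_div, inv_mul_le_iff₀ hL]
    exact (hl x hxS y hyS).trans (mul_le_mul_of_nonneg_left hyn hL.le)
  have hz1 : x - (1 / ℓ ‖g x‖) • (g x - g y) ∈ Metric.closedBall x (r ‖g x‖) := by
    rw [mem_closedBall_iff_norm, sub_sub_cancel_left, norm_neg]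
    linarith
  have hz2 : y - (1 / ℓ ‖g x‖) • (g y - g x) ∈ Metric.closedBall x (r ‖g x‖) := by
    rw [mem_closedBall_iff_norm]
    have e : y - (1 / ℓ ‖g x‖) • (g y - g x) - x
        = (1 / ℓ ‖g x‖) • (g x - g y) - (x - y) := by
      rw [← neg_sub (g x) (g y), smul_neg]; abel
    rw [e]
    refine (norm_sub_le _ _).trans ?_
    linarith
  have hc := convex_closedBall x (r ‖g x‖)
  have A := half_coco hc hsub hconv hgrad hL hl hxS hyS hz1
  have B := half_coco hc hsub hconv hgrad hL hl hyS hxS hz2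
  rw [norm_sub_rev (g y) (g x), ← neg_sub x y, inner_neg_right] at B
  rw [inner_sub_left]
  linarith
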